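/- arXiv:2505.08021 — 4 statements merged into one kernel-verified Lean document; each statement's English description precedes it below -/
import Mathlib

section
/- Every bounded GNN classifier has a finite spectrum. Moreover, if N is a GNN classifier in GNN_b^AC of dimension d with L layers whose aggregation functions are all k-bounded, then |sp(N,0)| = 2^d and, for each 0 ≤ ℓ ≤ L−1, |sp(N,ℓ+1)| ≤ |sp(N,ℓ)| · (k+1)^{|sp(N,ℓ)|}. -/
/-!
The labels at layer `ℓ + 1` are values of the combination function on pairs (or triples) formed by
a label at layer `ℓ` and the aggregated neighbour (and readout) multisets. Bounded aggregation
functions only see the capped multisets, and a multiset over a finite set `S` capped at `k` is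
determined by its multiplicity function `S → {0, …, k}`, so there are at most `(k + 1) ^ |S|` of
them (`cappedMultisets_finite`, `cappedMultisets_ncard_le`). In `AC` layers the auxiliary function
always receives the empty multiset, which yields the bound `|S| * (k + 1) ^ |S|`; finiteness for
all kinds of layers follows by induction on `ℓ`.
-/

attribute [local instance] Classical.propDecidable

noncomputable section

/-! ## Multisets with capped multiplicities, and bounded aggregation functions -/

/-- The multiset obtained from `M` by replacing every multiplicity greater than `k` by `k`. -/
def Multiset.capAt {α : Type*} (k : ℕ) (M : Multiset α) : Multiset α :=
  haveI := Classical.decEq α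
  M.toFinset.val.bind fun a => Multiset.replicate (min (M.count a) k) a

/-- A function on multisets is `k`-bounded if its value on any multiset agrees with its value
on the multiset with all multiplicities capped at `k`. -/
def KBounded {α β : Type*} (k : ℕ) (f : Multiset α → β) : Prop :=
  ∀ M : Multiset α, f M = f (M.capAt k)

/-- A function on multisets is bounded if it is `k`-bounded for some `k`;
it is set-based if it is `1`-bounded. -/
def BoundedAgg {α β : Type*} (f : Multiset α → β) : Prop :=
  ∃ k : ℕ, KBounded k f

/-! ## Finite undirected simple node-labelled graphs -/

structure LGraph (d : ℕ) where
  n : ℕ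
  adj : Fin n → Fin n → Prop
  symm : ∀ u v, adj u v → adj v u
  irrefl : ∀ v, ¬ adj v v
  label : Fin n → Fin d → Bool

/-- The neighbours of a node. -/
def LGraph.nbrs {d : ℕ} (G : LGraph d) (v : Fin G.n) : Finset (Fin G.n) :=
  Finset.univ.filter fun w => G.adj v w

/-- The non-neighbours of a node (excluding the node itself). -/
def LGraph.conbrs {d : ℕ} (G : LGraph d) (v : Fin G.n) : Finset (Fin G.n) :=
  Finset.univ.filter fun w => ¬ G.adj v w ∧ w ≠ v

/-! ## GNN classifiers -/

/-- The kind of the layers of a GNN: aggregate-combine (`AC`),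
aggregate-combine-readout (`ACR`), or extended aggregate-combine (`ACP`, i.e. `AC+`). -/
inductive GNNKind : Type
  | AC | ACR | ACP

/-- A GNN layer from dimension `din` to dimension `dout`: an aggregation function `agg`
(over neighbours), an auxiliary aggregation/readout function `aux` (fed the empty multiset in
`AC` layers, the multiset of all node labels in `ACR` layers, and the multiset of labels of
non-neighbours in `AC+` layers), and a combination function `comb`. -/
structure GNNLayer (din dout : ℕ) where
  m₁ : ℕ
  m₂ : ℕ
  agg : Multiset (Fin din → ℝ) → Fin m₁ → ℝ
  aux : Multiset (Fin din → ℝ) → Fin m₂ → ℝ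
  comb : (Fin din → ℝ) → (Fin m₁ → ℝ) → (Fin m₂ → ℝ) → Fin dout → ℝ

/-- A GNN classifier of dimension `d` with `L` layers of matching dimensions and a
classification function `cls`. -/
structure GNN (d : ℕ) where
  kind : GNNKind
  L : ℕ
  dims : ℕ → ℕ
  dims_zero : dims 0 = d
  layer : (ℓ : ℕ) → ℓ < L → GNNLayer (dims ℓ) (dims (ℓ + 1))
  cls : (Fin (dims L) → ℝ) → Bool

/-- The set of nodes whose labels are fed to the second aggregation function `aux`. -/
def GNN.auxSet {d : ℕ} (N : GNN d) (G : LGraph d) (v : Fin G.n) : Finset (Fin G.n) :=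
  match N.kind with
  | GNNKind.AC => ∅
  | GNNKind.ACR => Finset.univ
  | GNNKind.ACP => G.conbrs v

/-- The labelling of the nodes of `G` after `ℓ` layers of `N` have been applied. -/
def GNN.labelAt {d : ℕ} (N : GNN d) (G : LGraph d) : (ℓ : ℕ) → Fin G.n → Fin (N.dims ℓ) → ℝ
  | 0 => fun v i => if G.label v (Fin.cast N.dims_zero i) = true then 1 else 0
  | ℓ + 1 => fun v =>
      if h : ℓ < N.L then
        (N.layer ℓ h).comb (N.labelAt G ℓ v)
          ((N.layer ℓ h).agg ((G.nbrs v).val.map fun w => N.labelAt G ℓ w))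
          ((N.layer ℓ h).aux ((N.auxSet G v).val.map fun w => N.labelAt G ℓ w))
      else fun _ => 0

/-- The output of the GNN classifier `N` on the pointed graph `(G, v)`. -/
def GNN.eval {d : ℕ} (N : GNN d) (G : LGraph d) (v : Fin G.n) : Bool :=
  N.cls (N.labelAt G N.L v)

/-- The spectrum of `N` at layer `ℓ`: by convention, at layer `0` it is the set of Boolean
vectors of the dimension of `N`; at layer `ℓ + 1` it is the set of vectors that can occur as
node labels upon application of layer `ℓ + 1` in applications of `N` to graphs. -/
def GNN.spec {d : ℕ} (N : GNN d) : (ℓ : ℕ) → Set (Fin (N.dims ℓ) → ℝ)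
  | 0 => {x | ∀ i, x i = 0 ∨ x i = 1}
  | ℓ + 1 => {x | ∃ (G : LGraph d) (v : Fin G.n), N.labelAt G (ℓ + 1) v = x}

/-! ## Modal formulas (GMLC and its fragments GML, ML(E), ML) -/

inductive MForm (d : ℕ) : Type
  | prop : Fin d → MForm d
  | neg : MForm d → MForm d
  | and : MForm d → MForm d → MForm d
  | dia : ℕ → MForm d → MForm d
  | glob : ℕ → MForm d → MForm d

namespace MForm

/-- Modal depth. -/
def depth {d : ℕ} : MForm d → ℕ
  | prop _ => 0
  | neg φ => depth φ
  | and φ ψ => max (depth φ) (depth ψ)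
  | dia _ φ => depth φ + 1
  | glob _ φ => depth φ + 1

/-- Counting rank. -/
def rank {d : ℕ} : MForm d → ℕ
  | prop _ => 0
  | neg φ => rank φ
  | and φ ψ => max (rank φ) (rank ψ)
  | dia k φ => max k (rank φ)
  | glob k φ => max k (rank φ)

/-- Graded modal logic: no global modalities, grades are positive. -/
def IsGML {d : ℕ} : MForm d → Prop
  | prop _ => True
  | neg φ => IsGML φ
  | and φ ψ => IsGML φ ∧ IsGML ψ
  | dia k φ => 1 ≤ k ∧ IsGML φ
  | glob _ _ => False

/-- Basic modal logic: no global modalities, all graded modalities are `◇₁`. -/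
def IsML {d : ℕ} : MForm d → Prop
  | prop _ => True
  | neg φ => IsML φ
  | and φ ψ => IsML φ ∧ IsML ψ
  | dia k φ => k = 1 ∧ IsML φ
  | glob _ _ => False

/-- Graded modal logic with counting: grades are positive. -/
def IsGMLC {d : ℕ} : MForm d → Prop
  | prop _ => True
  | neg φ => IsGMLC φ
  | and φ ψ => IsGMLC φ ∧ IsGMLC ψ
  | dia k φ => 1 ≤ k ∧ IsGMLC φ
  | glob k φ => 1 ≤ k ∧ IsGMLC φ

/-- Modal logic with the global modality: all modalities are `◇₁` or `∃₁`. -/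
def IsMLE {d : ℕ} : MForm d → Prop
  | prop _ => True
  | neg φ => IsMLE φ
  | and φ ψ => IsMLE φ ∧ IsMLE ψ
  | dia k φ => k = 1 ∧ IsMLE φ
  | glob k φ => k = 1 ∧ IsMLE φ

/-- A tautology (needs a proposition to exist). -/
def top {d : ℕ} (hd : 0 < d) : MForm d :=
  neg (and (prop ⟨0, hd⟩) (neg (prop ⟨0, hd⟩)))

/-- Conjunction of a list of formulas (the empty conjunction is a tautology). -/
def conjList {d : ℕ} (hd : 0 < d) : List (MForm d) → MForm d
  | [] => top hd
  | [φ] => φ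
  | φ :: ψ :: rest => and φ (conjList hd (ψ :: rest))

end MForm

/-! ## Finite pointed Kripke models -/

structure KModel (d : ℕ) where
  W : Type
  fintype : Fintype W
  R : W → W → Prop
  symm : ∀ u v, R u v → R v u
  irrefl : ∀ v, ¬ R v v
  val : W → Fin d → Prop

/-- Satisfaction of modal formulas. -/
def KModel.sat {d : ℕ} (M : KModel d) : M.W → MForm d → Prop
  | v, MForm.prop p => M.val v p
  | v, MForm.neg φ => ¬ M.sat v φ
  | v, MForm.and φ ψ => M.sat v φ ∧ M.sat v ψ
  | v, MForm.dia k φ => k ≤ Nat.card {w : M.W // M.R v w ∧ M.sat w φ}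
  | v, MForm.glob k φ => k ≤ Nat.card {w : M.W // M.sat w φ}

/-- A list enumerating the worlds of a finite Kripke model. -/
def KModel.worldList {d : ℕ} (M : KModel d) : List M.W :=
  haveI := M.fintype
  Finset.univ.toList

/-- The Kripke model associated with a node-labelled graph. -/
def LGraph.toKModel {d : ℕ} (G : LGraph d) : KModel d where
  W := Fin G.n
  fintype := inferInstance
  R := G.adj
  symm := G.symm
  irrefl := G.irrefl
  val := fun v p => G.label v p = true

/-! ## Graded bisimulation games -/

/-- `GBisim c ℓ M v M' v'` holds iff Duplicator has a winning strategy in the `ℓ`-round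
`c`-graded bisimulation game starting from configuration `(M, v, M', v')`. -/
def GBisim {d : ℕ} (c : ℕ) : (ℓ : ℕ) → (M : KModel d) → M.W → (M' : KModel d) → M'.W → Prop
  | 0, M, v, M', v' => ∀ p, M.val v p ↔ M'.val v' p
  | ℓ + 1, M, v, M', v' =>
      (∀ p, M.val v p ↔ M'.val v' p) ∧
      (∀ U₁ : Finset M.W, U₁.Nonempty → U₁.card ≤ c → (∀ u ∈ U₁, M.R v u) →
        ∃ U₂ : Finset M'.W, U₂.card = U₁.card ∧ (∀ u ∈ U₂, M'.R v' u) ∧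
          ∀ u₂ ∈ U₂, ∃ u₁ ∈ U₁, GBisim c ℓ M u₁ M' u₂) ∧
      (∀ U₁ : Finset M'.W, U₁.Nonempty → U₁.card ≤ c → (∀ u ∈ U₁, M'.R v' u) →
        ∃ U₂ : Finset M.W, U₂.card = U₁.card ∧ (∀ u ∈ U₂, M.R v u) ∧
          ∀ u₂ ∈ U₂, ∃ u₁ ∈ U₁, GBisim c ℓ M u₂ M' u₁)

/-- `GBisimG c ℓ M v M' v'` holds iff Duplicator has a winning strategy in the `ℓ`-round
`c`-graded *global* bisimulation game starting from configuration `(M, v, M', v')`: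
Spoiler may additionally play global rounds, selecting worlds anywhere in one model. -/
def GBisimG {d : ℕ} (c : ℕ) : (ℓ : ℕ) → (M : KModel d) → M.W → (M' : KModel d) → M'.W → Prop
  | 0, M, v, M', v' => ∀ p, M.val v p ↔ M'.val v' p
  | ℓ + 1, M, v, M', v' =>
      (∀ p, M.val v p ↔ M'.val v' p) ∧
      (∀ U₁ : Finset M.W, U₁.Nonempty → U₁.card ≤ c → (∀ u ∈ U₁, M.R v u) →
        ∃ U₂ : Finset M'.W, U₂.card = U₁.card ∧ (∀ u ∈ U₂, M'.R v' u) ∧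
          ∀ u₂ ∈ U₂, ∃ u₁ ∈ U₁, GBisimG c ℓ M u₁ M' u₂) ∧
      (∀ U₁ : Finset M'.W, U₁.Nonempty → U₁.card ≤ c → (∀ u ∈ U₁, M'.R v' u) →
        ∃ U₂ : Finset M.W, U₂.card = U₁.card ∧ (∀ u ∈ U₂, M.R v u) ∧
          ∀ u₂ ∈ U₂, ∃ u₁ ∈ U₁, GBisimG c ℓ M u₂ M' u₁) ∧
      (∀ U₁ : Finset M.W, U₁.Nonempty → U₁.card ≤ c →
        ∃ U₂ : Finset M'.W, U₂.card = U₁.card ∧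
          ∀ u₂ ∈ U₂, ∃ u₁ ∈ U₁, GBisimG c ℓ M u₁ M' u₂) ∧
      (∀ U₁ : Finset M'.W, U₁.Nonempty → U₁.card ≤ c →
        ∃ U₂ : Finset M.W, U₂.card = U₁.card ∧
          ∀ u₂ ∈ U₂, ∃ u₁ ∈ U₁, GBisimG c ℓ M u₂ M' u₁)

/-! ## Characteristic formulas -/

/-- The conjunction of all propositions true at `v` and of the negations of all
propositions false at `v`. -/
def atomDesc {d : ℕ} (hd : 0 < d) (M : KModel d) (v : M.W) : MForm d :=
  MForm.conjList hd ((List.finRange d).map fun p =>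
    if M.val v p then MForm.prop p else MForm.neg (MForm.prop p))

/-- `|U^n_{v,w}|`: the number of neighbours `u` of `v` with `(M,u) ∼_{n,c} (M,w)`. -/
def USet {d : ℕ} (c n : ℕ) (M : KModel d) (v w : M.W) : ℕ :=
  Nat.card {u : M.W // M.R v u ∧ GBisim c n M u M w}

/-- The characteristic formula `φ^{ℓ,c}_{[M,v]}` of a finite pointed Kripke model for GML. -/
def charF {d : ℕ} (hd : 0 < d) (c : ℕ) (M : KModel d) : ℕ → M.W → MForm d
  | 0, v => atomDesc hd M v
  | n + 1, v =>
      MForm.conjList hd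
        ([atomDesc hd M v] ++
         ((M.worldList.filter fun w => decide (M.R v w)).flatMap fun w =>
            ((List.range c).map (· + 1)).filterMap fun k =>
              if k ≤ min (USet c n M v w) c then some (MForm.dia k (charF hd c M n w))
              else none) ++
         ((M.worldList.filter fun w => decide (M.R v w)).flatMap fun w =>
            ((List.range c).map (· + 1)).filterMap fun k =>
              if USet c n M v w < k ∧ k ≤ c then
                some (MForm.neg (MForm.dia k (charF hd c M n w)))
              else none) ++
         [MForm.neg (MForm.dia 1 (MForm.conjList hd
            ((M.worldList.filter fun w => decide (M.R v w)).map fun w =>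
              MForm.neg (charF hd c M n w))))])

/-- `|U^n_{v,w}|` for the global game. -/
def USetG {d : ℕ} (c n : ℕ) (M : KModel d) (v w : M.W) : ℕ :=
  Nat.card {u : M.W // M.R v u ∧ GBisimG c n M u M w}

/-- `|J^n_w|`: the number of worlds `u` with `(M,u) ∼^∃_{n,c} (M,w)`. -/
def JSetG {d : ℕ} (c n : ℕ) (M : KModel d) (w : M.W) : ℕ :=
  Nat.card {u : M.W // GBisimG c n M u M w}

/-- The global characteristic formula `φ^{ℓ,c}_{∃[M,v]}` for GMLC. -/
def charG {d : ℕ} (hd : 0 < d) (c : ℕ) (M : KModel d) : ℕ → M.W → MForm d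
  | 0, v => atomDesc hd M v
  | n + 1, v =>
      MForm.conjList hd
        ([atomDesc hd M v] ++
         ((M.worldList.filter fun w => decide (M.R v w)).flatMap fun w =>
            ((List.range c).map (· + 1)).filterMap fun k =>
              if k ≤ min (USetG c n M v w) c then some (MForm.dia k (charG hd c M n w))
              else none) ++
         ((M.worldList.filter fun w => decide (M.R v w)).flatMap fun w =>
            ((List.range c).map (· + 1)).filterMap fun k =>
              if USetG c n M v w < k ∧ k ≤ c then
                some (MForm.neg (MForm.dia k (charG hd c M n w)))
              else none) ++
         (M.worldList.flatMap fun w =>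
            ((List.range c).map (· + 1)).filterMap fun k =>
              if k ≤ min (JSetG c n M w) c then some (MForm.glob k (charG hd c M n w))
              else none) ++
         (M.worldList.flatMap fun w =>
            ((List.range c).map (· + 1)).filterMap fun k =>
              if JSetG c n M w < k ∧ k ≤ c then
                some (MForm.neg (MForm.glob k (charG hd c M n w)))
              else none) ++
         [MForm.neg (MForm.dia 1 (MForm.conjList hd
            ((M.worldList.filter fun w => decide (M.R v w)).map fun w =>
              MForm.neg (charG hd c M n w)))),
          MForm.neg (MForm.glob 1 (MForm.conjList hd
            (M.worldList.map fun w => MForm.neg (charG hd c M n w))))])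

/-! ## Two-variable first-order logic with counting quantifiers (C²) -/

/-- C² formulas over unary predicates `p₁, …, p_d` and one binary relation `E`, with the two
variables represented by `Bool` (`false` is the distinguished free variable `x`). -/
inductive C2Form (d : ℕ) : Type
  | prop : Fin d → Bool → C2Form d
  | edge : Bool → Bool → C2Form d
  | eq : Bool → Bool → C2Form d
  | neg : C2Form d → C2Form d
  | and : C2Form d → C2Form d → C2Form d
  | exC : ℕ → Bool → C2Form d → C2Form d

namespace C2Form

/-- Quantifier depth. -/
def depth {d : ℕ} : C2Form d → ℕ
  | prop _ _ => 0
  | edge _ _ => 0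
  | eq _ _ => 0
  | neg φ => depth φ
  | and φ ψ => max (depth φ) (depth ψ)
  | exC _ _ φ => depth φ + 1

/-- Counting rank. -/
def rank {d : ℕ} : C2Form d → ℕ
  | prop _ _ => 0
  | edge _ _ => 0
  | eq _ _ => 0
  | neg φ => rank φ
  | and φ ψ => max (rank φ) (rank ψ)
  | exC k _ φ => max k (rank φ)

/-- Well-formed C² formulas: all counting indices are positive. -/
def IsC2 {d : ℕ} : C2Form d → Prop
  | prop _ _ => True
  | edge _ _ => True
  | eq _ _ => True
  | neg φ => IsC2 φ
  | and φ ψ => IsC2 φ ∧ IsC2 ψ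
  | exC k _ φ => 1 ≤ k ∧ IsC2 φ

/-- FO² formulas: all counting quantifiers are with `k = 1`, i.e. ordinary `∃`. -/
def IsFO2 {d : ℕ} : C2Form d → Prop
  | prop _ _ => True
  | edge _ _ => True
  | eq _ _ => True
  | neg φ => IsFO2 φ
  | and φ ψ => IsFO2 φ ∧ IsFO2 ψ
  | exC k _ φ => k = 1 ∧ IsFO2 φ

/-- The set of free variables of a formula. -/
def free {d : ℕ} : C2Form d → Set Bool
  | prop _ b => {b}
  | edge b₁ b₂ => {b₁, b₂}
  | eq b₁ b₂ => {b₁, b₂}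
  | neg φ => free φ
  | and φ ψ => free φ ∪ free ψ
  | exC _ b φ => free φ \ {b}

end C2Form

/-- A finite first-order structure over the signature with unary predicates `p₁, …, p_d`
and one binary relation `E`. -/
structure FOModel (d : ℕ) where
  W : Type
  fintype : Fintype W
  E : W → W → Prop
  val : W → Fin d → Prop

/-- First-order satisfaction of C² formulas under an assignment of the two variables. -/
def FOModel.sat {d : ℕ} (M : FOModel d) : (Bool → M.W) → C2Form d → Prop
  | a, C2Form.prop p b => M.val (a b) p
  | a, C2Form.edge b₁ b₂ => M.E (a b₁) (a b₂)
  | a, C2Form.eq b₁ b₂ => a b₁ = a b₂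
  | a, C2Form.neg φ => ¬ M.sat a φ
  | a, C2Form.and φ ψ => M.sat a φ ∧ M.sat a ψ
  | a, C2Form.exC k b φ => k ≤ Nat.card {w : M.W // M.sat (Function.update a b w) φ}

/-- The first-order structure associated with a node-labelled graph. -/
def LGraph.toFOModel {d : ℕ} (G : LGraph d) : FOModel d where
  W := Fin G.n
  fintype := inferInstance
  E := G.adj
  val := fun v p => G.label v p = true

/-! ## Two-pebble graded games -/

/-- The positions of the pebbles (pair 1 placed, pair 2 possibly unplaced) form a partial
isomorphism between `M` and `M'`. -/
def PIso {d : ℕ} (M M' : FOModel d) (p₁ : M.W × M'.W) (p₂ : Option (M.W × M'.W)) : Prop :=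
  ((∀ q, M.val p₁.1 q ↔ M'.val p₁.2 q) ∧ (M.E p₁.1 p₁.1 ↔ M'.E p₁.2 p₁.2)) ∧
  ∀ x ∈ p₂,
    (∀ q, M.val x.1 q ↔ M'.val x.2 q) ∧ (M.E x.1 x.1 ↔ M'.E x.2 x.2) ∧
    (p₁.1 = x.1 ↔ p₁.2 = x.2) ∧
    (M.E p₁.1 x.1 ↔ M'.E p₁.2 x.2) ∧ (M.E x.1 p₁.1 ↔ M'.E x.2 p₁.2)

/-- Update the configuration by moving pebble pair `i` (`false` = pair 1, `true` = pair 2)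
to the given pair of worlds. -/
def updCfg {α β : Type*} (p₁ : α × β) (p₂ : Option (α × β)) :
    Bool → α × β → (α × β) × Option (α × β)
  | false, x => (x, p₂)
  | true, x => (p₁, some x)

/-- `PebbleWin c M M' ℓ p₁ p₂` holds iff Duplicator has a winning strategy in the 2-pebble
`ℓ`-round `c`-graded game from the configuration with pebble pair 1 on `p₁` and pebble pair 2
on `p₂` (if placed): she can ensure that the pebble positions always form a partial
isomorphism. -/
def PebbleWin {d : ℕ} (c : ℕ) (M M' : FOModel d) :
    (ℓ : ℕ) → M.W × M'.W → Option (M.W × M'.W) → Prop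
  | 0, p₁, p₂ => PIso M M' p₁ p₂
  | ℓ + 1, p₁, p₂ =>
      PIso M M' p₁ p₂ ∧
      ∀ i : Bool,
        (∀ U : Finset M.W, U.Nonempty → U.card ≤ c →
          ∃ U' : Finset M'.W, U'.card = U.card ∧
            ∀ u' ∈ U', ∃ u ∈ U,
              PebbleWin c M M' ℓ (updCfg p₁ p₂ i (u, u')).1 (updCfg p₁ p₂ i (u, u')).2) ∧
        (∀ U : Finset M'.W, U.Nonempty → U.card ≤ c →
          ∃ U' : Finset M.W, U'.card = U.card ∧
            ∀ u ∈ U', ∃ u' ∈ U,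
              PebbleWin c M M' ℓ (updCfg p₁ p₂ i (u, u')).1 (updCfg p₁ p₂ i (u, u')).2)

end

/-- The multisets with elements in `S`, after capping all multiplicities at `k`. -/
def cappedMultisets {α : Type*} (k : ℕ) (S : Set α) : Set (Multiset α) :=
  {C | ∃ M : Multiset α, (∀ a ∈ M, a ∈ S) ∧ M.capAt k = C}

/-- Over a finite `S`, capped multisets are parametrised by functions `S → Fin (k + 1)`, read as
multiplicities. -/
lemma cappedMultisets_subset_range {α : Type*} (k : ℕ) (S : Set α) [Fintype S] :
    cappedMultisets k S ⊆ Set.range (fun f : S → Fin (k + 1) =>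
      ∑ a : S, Multiset.replicate (f a : ℕ) (a : α)) := by
  rintro C ⟨M, hM, rfl⟩
  let _ := Classical.decEq α
  refine ⟨fun a => ⟨min (M.count (a : α)) k, by omega⟩, ?_⟩
  have hsub : M.toFinset ⊆ S.toFinset := fun a ha => by
    simpa using hM a (by simpa using ha)
  have hcap : M.capAt k
      = ∑ a ∈ M.toFinset, Multiset.replicate (min (M.count a) k) a := by
    simp only [Multiset.capAt, Multiset.bind, Multiset.join, Finset.sum]
  rw [hcap, Finset.sum_subset hsub, ← Finset.sum_coe_sort S.toFinset]
  · refine Fintype.sum_equiv (Equiv.subtypeEquivRight (by simp)) _ _ ?_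
    intro a
    rfl
  · intro a _ ha
    have h0 : M.count a = 0 := Multiset.count_eq_zero.2 (by simpa using ha)
    simp [h0]

lemma cappedMultisets_finite {α : Type*} (k : ℕ) {S : Set α} (hS : S.Finite) :
    (cappedMultisets k S).Finite := by
  have := hS.fintype
  exact (Set.finite_range _).subset (cappedMultisets_subset_range k S)

lemma cappedMultisets_ncard_le {α : Type*} (k : ℕ) {S : Set α} (hS : S.Finite) :
    (cappedMultisets k S).ncard ≤ (k + 1) ^ S.ncard := by
  have := hS.fintype
  refine (Set.ncard_le_ncard (cappedMultisets_subset_range k S) (Set.finite_range _)).trans ?_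
  rw [← Nat.card_coe_set_eq]
  refine (Finite.card_range_le _).trans ?_
  simp [Nat.card_eq_fintype_card]

lemma GNN.labelAt_mem_spec {d : ℕ} (N : GNN d) (G : LGraph d) (ℓ : ℕ) (v : Fin G.n) :
    N.labelAt G ℓ v ∈ N.spec ℓ := by
  cases ℓ with
  | zero =>
    intro i
    simp only [GNN.labelAt]
    split_ifs <;> simp
  | succ ℓ => exact ⟨G, v, rfl⟩

lemma GNN.capAt_map_labelAt_mem {d : ℕ} (N : GNN d) (G : LGraph d) (ℓ k : ℕ)
    (U : Finset (Fin G.n)) :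
    (U.val.map fun w => N.labelAt G ℓ w).capAt k ∈ cappedMultisets k (N.spec ℓ) := by
  refine ⟨_, fun a ha => ?_, rfl⟩
  obtain ⟨w, _, rfl⟩ := Multiset.mem_map.1 ha
  exact N.labelAt_mem_spec G ℓ w

lemma GNN.auxSet_of_AC {d : ℕ} (N : GNN d) (hN : N.kind = GNNKind.AC) (G : LGraph d)
    (v : Fin G.n) : N.auxSet G v = ∅ := by
  simp [GNN.auxSet, hN]

lemma GNN.spec_zero_eq_range {d : ℕ} (N : GNN d) :
    N.spec 0 = Set.range (fun (b : Fin (N.dims 0) → Bool) i => if b i then (1 : ℝ) else 0) := by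
  ext x
  constructor
  · intro hx
    refine ⟨fun i => decide (x i = 1), funext fun i => ?_⟩
    rcases hx i with h | h <;> simp [h]
  · rintro ⟨b, rfl⟩ i
    by_cases h : b i <;> simp [h]

lemma GNN.spec_zero_finite {d : ℕ} (N : GNN d) : (N.spec 0).Finite := by
  rw [N.spec_zero_eq_range]
  exact Set.finite_range _

lemma GNN.spec_zero_ncard {d : ℕ} (N : GNN d) : (N.spec 0).ncard = 2 ^ d := by
  rw [N.spec_zero_eq_range, ← Nat.card_coe_set_eq, Nat.card_range_of_injective]
  · simp [N.dims_zero]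
  · intro b c h
    funext i
    have hi := congrFun h i
    cases hb : b i <;> cases hc : c i <;> simp_all

/-- If all inputs of the auxiliary function in layer `ℓ + 1` give values in a set `A`, then the
labels at layer `ℓ + 1` are combinations of a label at layer `ℓ`, a capped multiset of such labels
and an element of `A`. -/
lemma GNN.spec_succ_subset {d : ℕ} (N : GNN d) (k ℓ : ℕ) (h : ℓ < N.L)
    (hagg : KBounded k (N.layer ℓ h).agg) (A : Set (Fin (N.layer ℓ h).m₂ → ℝ))
    (hA : ∀ (G : LGraph d) (v : Fin G.n),
      (N.layer ℓ h).aux ((N.auxSet G v).val.map fun w => N.labelAt G ℓ w) ∈ A) :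
    N.spec (ℓ + 1) ⊆ (fun p => (N.layer ℓ h).comb p.1 ((N.layer ℓ h).agg p.2.1) p.2.2) ''
      (N.spec ℓ ×ˢ cappedMultisets k (N.spec ℓ) ×ˢ A) := by
  rintro x ⟨G, v, rfl⟩
  refine ⟨(N.labelAt G ℓ v, ((G.nbrs v).val.map fun w => N.labelAt G ℓ w).capAt k,
    (N.layer ℓ h).aux ((N.auxSet G v).val.map fun w => N.labelAt G ℓ w)),
    ⟨N.labelAt_mem_spec G ℓ v, N.capAt_map_labelAt_mem G ℓ k (G.nbrs v),
    hA G v⟩, ?_⟩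
  simp only [GNN.labelAt, dif_pos h]
  rw [← hagg]

lemma GNN.spec_finite {d : ℕ} (N : GNN d)
    (hN : ∀ (ℓ : ℕ) (h : ℓ < N.L), BoundedAgg (N.layer ℓ h).agg ∧
      (N.kind = GNNKind.AC ∨ BoundedAgg (N.layer ℓ h).aux)) (ℓ : ℕ) : (N.spec ℓ).Finite := by
  induction ℓ with
  | zero => exact N.spec_zero_finite
  | succ ℓ ih =>
    by_cases h : ℓ < N.L
    · obtain ⟨⟨k, hk⟩, haux⟩ := hN ℓ h
      obtain ⟨A, hAfin, hA⟩ : ∃ A : Set (Fin (N.layer ℓ h).m₂ → ℝ), A.Finite ∧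
          ∀ (G : LGraph d) (v : Fin G.n),
            (N.layer ℓ h).aux ((N.auxSet G v).val.map fun w => N.labelAt G ℓ w) ∈ A := by
        rcases haux with hAC | ⟨k', hk'⟩
        · refine ⟨{(N.layer ℓ h).aux 0}, Set.finite_singleton _, fun G v => ?_⟩
          simp [N.auxSet_of_AC hAC]
        · refine ⟨_, (cappedMultisets_finite k' ih).image (N.layer ℓ h).aux, fun G v => ?_⟩
          rw [hk']
          exact Set.mem_image_of_mem _ (N.capAt_map_labelAt_mem G ℓ k' _)
      exact ((ih.prod ((cappedMultisets_finite k ih).prod hAfin)).image _).subset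
        (N.spec_succ_subset k ℓ h hk A hA)
    · -- Beyond the last layer all labels are the zero vector by convention.
      refine (Set.finite_singleton (fun _ => (0 : ℝ))).subset ?_
      rintro x ⟨G, v, rfl⟩
      simp [GNN.labelAt, h]

/-- Every bounded GNN classifier has a finite spectrum. Moreover, if `N` is a
GNN classifier in `GNN_b^AC` of dimension `d` with `L` layers whose aggregation functions are
all `k`-bounded, then `|sp(N,0)| = 2^d` and, for each `0 ≤ ℓ ≤ L−1`,
`|sp(N,ℓ+1)| ≤ |sp(N,ℓ)| · (k+1)^{|sp(N,ℓ)|}`. -/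
theorem bounded_gnn_finite_spectrum :
    (∀ (d : ℕ) (N : GNN d),
      (∀ (ℓ : ℕ) (h : ℓ < N.L),
        BoundedAgg (N.layer ℓ h).agg ∧
          (N.kind = GNNKind.AC ∨ BoundedAgg (N.layer ℓ h).aux)) →
      ∀ ℓ : ℕ, (N.spec ℓ).Finite) ∧
    (∀ (d : ℕ) (N : GNN d) (k : ℕ),
      N.kind = GNNKind.AC →
      (∀ (ℓ : ℕ) (h : ℓ < N.L), KBounded k (N.layer ℓ h).agg) →
      (N.spec 0).ncard = 2 ^ d ∧
        ∀ ℓ : ℕ, ℓ + 1 ≤ N.L →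
          (N.spec (ℓ + 1)).ncard ≤ (N.spec ℓ).ncard * (k + 1) ^ (N.spec ℓ).ncard) := by
  refine ⟨fun d N hN => N.spec_finite hN, fun d N k hAC hk => ⟨N.spec_zero_ncard, fun ℓ h => ?_⟩⟩
  have hfin : (N.spec ℓ).Finite :=
    N.spec_finite (fun ℓ h => ⟨⟨k, hk ℓ h⟩, Or.inl hAC⟩) ℓ
  have hC := cappedMultisets_finite k hfin
  have hprod := hfin.prod (hC.prod (Set.finite_singleton ((N.layer ℓ h).aux 0)))
  refine (Set.ncard_le_ncard (N.spec_succ_subset k ℓ h (hk ℓ h) {(N.layer ℓ h).aux 0}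
    fun G v => by simp [N.auxSet_of_AC hAC]) (hprod.image _)).trans ?_
  refine (Set.ncard_image_le hprod).trans ?_
  rw [Set.ncard_prod, Set.ncard_prod, Set.ncard_singleton, mul_one]
  exact Nat.mul_le_mul_left _ (cappedMultisets_ncard_le k hfin)
end

section
/- GML ≤ GNN_b^AC: for every graded modal logic (GML) classifier φ of dimension d there exists a GNN classifier N_φ in GNN_b^AC of dimension d such that for every pointed graph (G,v) of dimension d, N_φ(G,v) = true if and only if (M_G,v) ⊨ φ. -/
/-! A GML formula `φ` is evaluated bottom-up. Its subformulas are listed so that every formula comes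
after its immediate subformulas (`MForm.postorder`), and the GNN `gmlGNN` has one layer per list
entry: the layer for the entry `χ` keeps all coordinates of a node label and appends one, the truth
value of `χ` at the node. For a Boolean connective this value is read off from earlier coordinates
of the node itself; for `χ = ◇_k ψ` the aggregation function reports whether at least `k` of the
neighbour labels say that `ψ` is true.

That aggregation function is `k`-bounded although neighbours satisfying `ψ` may carry different
labels: a sub-multiset of size `k` has all its multiplicities at most `k`, hence survives the capping
of multiplicities at `k` (`le_countP_capAt_iff`). The correctness of the truth values is an
induction on the number of layers (`gmlGNN_labelAt`). -/

attribute [local instance] Classical.propDecidable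

/-! ### Bounded counting -/

theorem count_capAt {α : Type*} (k : ℕ) (M : Multiset α) (a : α) :
    (M.capAt k).count a = min (M.count a) k := by
  unfold Multiset.capAt
  rw [Multiset.count_bind]
  simp only [Multiset.count_replicate]
  change ∑ b ∈ @Multiset.toFinset α (Classical.decEq α) M, _ = _
  rw [Finset.sum_eq_single a]
  · rw [if_pos rfl]
  · intro b _ hb
    rw [if_neg hb]
  · intro ha
    rw [Multiset.mem_toFinset] at ha
    rw [if_pos rfl, Multiset.count_eq_zero_of_notMem ha]
    simp

/-- Capping multiplicities at `k` does not affect whether at least `k` elements satisfy `p`. -/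
theorem le_countP_capAt_iff {α : Type*} (k : ℕ) (p : α → Prop) (M : Multiset α) :
    k ≤ (M.capAt k).countP p ↔ k ≤ M.countP p := by
  constructor
  · intro h
    refine h.trans (Multiset.countP_le_of_le _ (Multiset.le_iff_count.2 fun a => ?_))
    rw [count_capAt]
    exact min_le_left _ _
  · intro h
    rw [Multiset.countP_eq_card_filter] at h
    obtain ⟨t, ht⟩ := Multiset.card_pos_iff_exists_mem.1
      ((Multiset.card_powersetCard k (M.filter p)).symm ▸ Nat.choose_pos h)
    obtain ⟨ht, hcard⟩ := Multiset.mem_powersetCard.1 ht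
    have htp : ∀ a ∈ t, p a := fun a ha => (Multiset.mem_filter.1 (Multiset.mem_of_le ht ha)).2
    have hle : t ≤ M.capAt k := by
      refine Multiset.le_iff_count.2 fun a => ?_
      rw [count_capAt]
      refine le_min ?_ ?_
      · exact Multiset.count_le_of_le a (ht.trans (Multiset.filter_le _ _))
      · exact hcard ▸ Multiset.count_le_card a t
    calc k = t.countP p := by rw [Multiset.countP_eq_card.2 htp, hcard]
      _ ≤ _ := Multiset.countP_le_of_le _ hle

/-! ### Subformula lists -/

namespace MForm

/-- The immediate subformulas of a formula. -/
def parts {d : ℕ} : MForm d → List (MForm d)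
  | prop _ => []
  | neg φ => [φ]
  | and φ ψ => [φ, ψ]
  | dia _ φ => [φ]
  | glob _ φ => [φ]

/-- The subformulas of a formula in post-order, with repetitions; the formula itself is last. -/
def postorder {d : ℕ} : MForm d → List (MForm d)
  | prop p => [prop p]
  | neg φ => postorder φ ++ [neg φ]
  | and φ ψ => (postorder φ ++ postorder ψ) ++ [and φ ψ]
  | dia k φ => postorder φ ++ [dia k φ]
  | glob k φ => postorder φ ++ [glob k φ]

/-- Every formula in the list is preceded in the list by its immediate subformulas. -/
def ClosedList {d : ℕ} (l : List (MForm d)) : Prop :=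
  ∀ (i : ℕ) (χ : MForm d), l[i]? = some χ → ∀ ψ ∈ χ.parts, ∃ j < i, l[j]? = some ψ

theorem ClosedList.append {d : ℕ} {l₁ l₂ : List (MForm d)} (h₁ : ClosedList l₁)
    (h₂ : ClosedList l₂) : ClosedList (l₁ ++ l₂) := by
  intro i χ hi ψ hψ
  by_cases hlt : i < l₁.length
  · rw [List.getElem?_append_left hlt] at hi
    obtain ⟨j, hj, hj'⟩ := h₁ i χ hi ψ hψ
    exact ⟨j, hj, by rw [List.getElem?_append_left (hj.trans hlt), hj']⟩
  · push Not at hlt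
    rw [List.getElem?_append_right hlt] at hi
    obtain ⟨j, hj, hj'⟩ := h₂ _ χ hi ψ hψ
    refine ⟨l₁.length + j, by omega, ?_⟩
    rw [List.getElem?_append_right (by omega), ← hj']
    congr 1
    omega

theorem ClosedList.concat {d : ℕ} {l : List (MForm d)} {φ : MForm d} (h : ClosedList l)
    (hφ : ∀ ψ ∈ φ.parts, ψ ∈ l) : ClosedList (l ++ [φ]) := by
  intro i χ hi ψ hψ
  by_cases hlt : i < l.length
  · rw [List.getElem?_append_left hlt] at hi
    obtain ⟨j, hj, hj'⟩ := h i χ hi ψ hψ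
    exact ⟨j, hj, by rw [List.getElem?_append_left (hj.trans hlt), hj']⟩
  · push Not at hlt
    rw [List.getElem?_append_right hlt, List.getElem?_singleton] at hi
    split_ifs at hi with h0
    cases hi
    obtain ⟨j, hj⟩ := List.mem_iff_getElem?.1 (hφ ψ hψ)
    have hjl : j < l.length := (List.getElem?_eq_some_iff.1 hj).1
    exact ⟨j, by omega, by rw [List.getElem?_append_left hjl, hj]⟩

theorem self_mem_postorder {d : ℕ} (φ : MForm d) : φ ∈ φ.postorder := by
  cases φ <;> simp [postorder]

theorem closedList_postorder {d : ℕ} (φ : MForm d) : ClosedList φ.postorder := by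
  induction φ with
  | prop p =>
    have h : ClosedList ([] : List (MForm d)) := by intro i χ hi; simp at hi
    exact h.concat (φ := prop p) (by simp [parts])
  | neg φ ih => exact ih.concat (by simp [parts, self_mem_postorder])
  | and φ ψ ih₁ ih₂ => exact (ih₁.append ih₂).concat (by simp [parts, self_mem_postorder])
  | dia k φ ih => exact ih.concat (by simp [parts, self_mem_postorder])
  | glob k φ ih => exact ih.concat (by simp [parts, self_mem_postorder])

theorem isGML_of_mem_postorder {d : ℕ} {φ : MForm d} (hφ : φ.IsGML) :
    ∀ χ ∈ φ.postorder, χ.IsGML := by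
  induction φ with
  | prop p => simp [postorder, IsGML]
  | neg φ ih =>
    intro χ hχ
    rcases List.mem_append.1 hχ with h | h
    · exact ih hφ χ h
    · rw [List.mem_singleton.1 h]; exact hφ
  | and φ ψ ih₁ ih₂ =>
    intro χ hχ
    rcases List.mem_append.1 hχ with h | h
    · rcases List.mem_append.1 h with h | h
      · exact ih₁ hφ.1 χ h
      · exact ih₂ hφ.2 χ h
    · rw [List.mem_singleton.1 h]; exact hφ
  | dia k φ ih =>
    intro χ hχ
    rcases List.mem_append.1 hχ with h | h
    · exact ih hφ.2 χ h
    · rw [List.mem_singleton.1 h]; exact hφ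
  | glob k φ ih => exact hφ.elim

end MForm

/-! ### The network -/

noncomputable section

/-- The node label `x`, whose coordinate `d + i` stands for the `i`-th formula of `l`, records that
the formula `χ` is true. -/
def Reads {d : ℕ} (l : List (MForm d)) {ℓ : ℕ} (x : Fin (d + ℓ) → ℝ) (χ : MForm d) : Prop :=
  ∃ (i : ℕ) (h : i < ℓ), l[i]? = some χ ∧ x ⟨d + i, by omega⟩ = 1

/-- The aggregation function of layer `ℓ`: if the `ℓ`-th formula of `l` is `◇_k χ`, it indicates
whether at least `k` of the incoming labels record that `χ` is true. -/
def gmlAgg {d : ℕ} (l : List (MForm d)) (ℓ : ℕ) (M : Multiset (Fin (d + ℓ) → ℝ)) :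
    Fin 1 → ℝ := fun _ =>
  match l[ℓ]? with
  | some (MForm.dia k χ) => if k ≤ M.countP (fun x => Reads l x χ) then 1 else 0
  | _ => 0

/-- The truth value of the `ℓ`-th formula of `l` at a node, computed from the label `x` of the node
and the aggregated value `y`. -/
def gmlNew {d : ℕ} (l : List (MForm d)) (ℓ : ℕ) (x : Fin (d + ℓ) → ℝ) (y : Fin 1 → ℝ) : ℝ :=
  match l[ℓ]? with
  | some (MForm.prop p) => x (Fin.castAdd ℓ p)
  | some (MForm.neg χ) => if Reads l x χ then 0 else 1
  | some (MForm.and χ ψ) => if Reads l x χ ∧ Reads l x ψ then 1 else 0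
  | some (MForm.dia _ _) => y 0
  | _ => 0

/-- The AC-GNN whose layer `ℓ` appends to each node label the truth value of the `ℓ`-th formula of
`l`, and which finally accepts the nodes where `φ` is recorded as true. -/
def gmlGNN {d : ℕ} (l : List (MForm d)) (φ : MForm d) : GNN d where
  kind := GNNKind.AC
  L := l.length
  dims := fun ℓ => d + ℓ
  dims_zero := rfl
  layer := fun ℓ _ =>
    { m₁ := 1
      m₂ := 0
      agg := gmlAgg l ℓ
      aux := fun _ _ => 0
      comb := fun x y _ i => if h : i.1 < d + ℓ then x ⟨i.1, h⟩ else gmlNew l ℓ x y }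
  cls := fun x => decide (Reads l x φ)

end

theorem boundedAgg_gmlAgg {d : ℕ} (l : List (MForm d)) (ℓ : ℕ) : BoundedAgg (gmlAgg l ℓ) := by
  rcases h : l[ℓ]? with _ | χ
  · exact ⟨0, fun M => by funext j; simp [gmlAgg, h]⟩
  · cases χ with
    | dia k χ =>
      exact ⟨k, fun M => by funext j; simp only [gmlAgg, h, le_countP_capAt_iff]⟩
    | _ => exact ⟨0, fun M => by funext j; simp [gmlAgg, h]⟩

/-! ### Correctness -/

theorem gmlGNN_labelAt_succ {d : ℕ} (l : List (MForm d)) (φ : MForm d) (G : LGraph d) {ℓ : ℕ}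
    (hℓ : ℓ < l.length) (v : Fin G.n) (i : ℕ) (hi : i < d + (ℓ + 1)) :
    (gmlGNN l φ).labelAt G (ℓ + 1) v ⟨i, hi⟩ =
      if h : i < d + ℓ then (gmlGNN l φ).labelAt G ℓ v ⟨i, h⟩
      else gmlNew l ℓ ((gmlGNN l φ).labelAt G ℓ v)
        (gmlAgg l ℓ ((G.nbrs v).val.map fun w => (gmlGNN l φ).labelAt G ℓ w)) := by
  exact congrFun (dif_pos (show ℓ < (gmlGNN l φ).L from hℓ)) _

theorem card_nbrs_eq_countP {d : ℕ} (G : LGraph d) (v : Fin G.n) {α : Type*} (f : Fin G.n → α)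
    (P : α → Prop) (S : Fin G.n → Prop) (h : ∀ w, P (f w) ↔ S w) :
    Nat.card {w : Fin G.n // G.adj v w ∧ S w} = ((G.nbrs v).val.map f).countP P := by
  rw [Multiset.countP_map, Nat.card_eq_fintype_card, Fintype.card_subtype]
  simp only [h]
  rw [LGraph.nbrs, ← Finset.filter_val, Finset.filter_filter]
  rfl

theorem ite_eq_one_iff (c : Prop) [Decidable c] : (if c then (1 : ℝ) else 0) = 1 ↔ c := by
  split_ifs with h <;> simp [h]

/-- If the coordinates of `x` carry correct truth values `S`, then `Reads` is correct on the
formulas occurring among the first `ℓ` entries of `l`. -/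
theorem reads_iff {d : ℕ} {l : List (MForm d)} {ℓ : ℕ} {x : Fin (d + ℓ) → ℝ}
    {S : MForm d → Prop}
    (hx : ∀ (i : ℕ) (h : i < ℓ) (χ : MForm d), l[i]? = some χ →
      (x ⟨d + i, by omega⟩ = 1 ↔ S χ))
    {χ : MForm d} (hχ : ∃ j < ℓ, l[j]? = some χ) : Reads l x χ ↔ S χ := by
  constructor
  · rintro ⟨i, h, hi, h1⟩
    exact (hx i h χ hi).1 h1
  · intro hS
    obtain ⟨j, hj, hj'⟩ := hχ
    exact ⟨j, hj, hj', (hx j hj χ hj').2 hS⟩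

/-- After `ℓ` layers, the first `d` coordinates are the input label and coordinate `d + i` is the
truth value of the `i`-th formula of the list, for `i < ℓ`. -/
theorem gmlGNN_labelAt {d : ℕ} {l : List (MForm d)} (hl : MForm.ClosedList l)
    (hg : ∀ χ ∈ l, χ.IsGML) (φ : MForm d) (G : LGraph d) (ℓ : ℕ) (hℓ : ℓ ≤ l.length) :
    ∀ v : Fin G.n,
      (∀ p : Fin d, (gmlGNN l φ).labelAt G ℓ v (Fin.castAdd ℓ p) =
        if G.label v p = true then 1 else 0) ∧
      ∀ (i : ℕ) (h : i < ℓ) (χ : MForm d), l[i]? = some χ →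
        ((gmlGNN l φ).labelAt G ℓ v ⟨d + i, Nat.add_lt_add_left h d⟩ = 1 ↔
          G.toKModel.sat v χ) := by
  induction ℓ with
  | zero => exact fun v => ⟨fun p => rfl, fun i h => absurd h (Nat.not_lt_zero i)⟩
  | succ ℓ ih =>
    have ih := ih (by omega)
    intro v
    refine ⟨fun p => ?_, fun i h χ hχ => ?_⟩
    · have h := gmlGNN_labelAt_succ l φ G hℓ v p.1 (by omega)
      rw [dif_pos (by omega)] at h
      exact h.trans ((ih v).1 p)
    · rw [gmlGNN_labelAt_succ l φ G hℓ v]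
      by_cases hi : i < ℓ
      · rw [dif_pos (by omega)]
        exact (ih v).2 i hi χ hχ
      obtain rfl : i = ℓ := by omega
      rw [dif_neg (by omega)]
      have hr : ∀ w : Fin G.n, ∀ ψ ∈ χ.parts,
          (Reads l ((gmlGNN l φ).labelAt G i w : Fin (d + i) → ℝ) ψ ↔ G.toKModel.sat w ψ) :=
        fun w ψ hψ => reads_iff (S := fun ψ => G.toKModel.sat w ψ) (ih w).2 (hl i χ hχ ψ hψ)
      have hgml := hg χ (List.mem_of_getElem? hχ)
      cases χ with
      | prop p =>
        simp only [gmlNew, hχ]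
        rw [(ih v).1 p]
        simp [KModel.sat, LGraph.toKModel]
      | neg ψ =>
        have h1 := hr v ψ (by simp [MForm.parts])
        simp only [gmlNew, hχ, h1, KModel.sat]
        split_ifs with hs <;> simp [hs]
      | and ψ₁ ψ₂ =>
        have h1 := hr v ψ₁ (by simp [MForm.parts])
        have h2 := hr v ψ₂ (by simp [MForm.parts])
        simp only [gmlNew, hχ, h1, h2, KModel.sat]
        split_ifs with hs <;> simp [hs]
      | dia k ψ =>
        have h1 : ∀ w : Fin G.n, _ := fun w => hr w ψ (by simp [MForm.parts])
        have hcard := card_nbrs_eq_countP G v (fun w => (gmlGNN l φ).labelAt G i w)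
          (fun x => Reads l x ψ) (fun w => G.toKModel.sat w ψ) h1
        simp only [gmlNew, gmlAgg, hχ, KModel.sat]
        refine Iff.trans ?_ (iff_of_eq (congrArg (k ≤ ·) hcard.symm))
        exact ite_eq_one_iff _
      | glob k ψ => exact hgml.elim

/-- `GML ≤ GNN_b^AC`: for every graded modal logic classifier `φ` of dimension
`d` there exists a GNN classifier `N_φ` in `GNN_b^AC` of dimension `d` such that for every
pointed graph `(G,v)` of dimension `d`, `N_φ(G,v) = true` iff `(M_G,v) ⊨ φ`. -/
theorem gml_le_gnn_b_ac :
    ∀ (d : ℕ) (φ : MForm d), φ.IsGML →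
      ∃ N : GNN d, N.kind = GNNKind.AC ∧
        (∀ (ℓ : ℕ) (h : ℓ < N.L), BoundedAgg (N.layer ℓ h).agg) ∧
        ∀ (G : LGraph d) (v : Fin G.n),
          N.eval G v = true ↔ (LGraph.toKModel G).sat v φ := by
  intro d φ hφ
  refine ⟨gmlGNN φ.postorder φ, rfl, fun ℓ _ => boundedAgg_gmlAgg _ ℓ, fun G v => ?_⟩
  have h := (gmlGNN_labelAt φ.closedList_postorder (MForm.isGML_of_mem_postorder hφ) φ G _
    le_rfl v).2
  obtain ⟨j, hj⟩ := List.mem_iff_getElem?.1 φ.self_mem_postorder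
  have hjl := (List.getElem?_eq_some_iff.1 hj).1
  exact decide_eq_true_iff.trans
    (reads_iff (S := fun ψ => G.toKModel.sat v ψ) h ⟨j, hjl, hj⟩)
end

section
/- ML ≤ GNN_s^AC: for every basic modal logic (ML) classifier φ of dimension d there exists a GNN classifier N_φ in GNN_s^AC of dimension d such that for every pointed graph (G,v) of dimension d, N_φ(G,v) = true if and only if (M_G,v) ⊨ φ. -/
/-!
Combination functions are arbitrary, so a single network, depending on the formula only through its
number `L` of layers and its classification function, works: each layer appends to the label of a
node one real number that codes, injectively, the finite set of current labels of its neighbours.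
This aggregation is set-based, since it only looks at the support of the multiset, and a suitable
injection exists because a finite-dimensional real space has at most continuum many finite subsets
(`exists_finset_code`).

Two nodes (possibly of different graphs) with equal labels after `ℓ` layers carry the same
propositions, and for `ℓ ≥ 1` each neighbour of one is matched by a neighbour of the other with
the same label after `ℓ - 1` layers. Hence they satisfy the same ML formulas of modal depth at most
`ℓ` (`refineGNN_sat`). With `L` the depth of `φ`, the truth of `φ` is therefore a function of the
final label, and this function is the classification function.
-/

attribute [local instance] Classical.propDecidable

/-- The finite subsets of `ℝ^k` can be coded injectively by real numbers. -/
theorem exists_finset_code (k : ℕ) :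
    ∃ e : Finset (Fin k → ℝ) → ℝ, Function.Injective e := by
  have hk : Cardinal.mk (Fin k → ℝ) ≤ Cardinal.continuum := by
    rw [← Cardinal.power_def, Cardinal.mk_real, Cardinal.mk_fin]
    exact Cardinal.power_nat_le Cardinal.aleph0_le_continuum
  have h : Cardinal.mk (Finset (Fin k → ℝ)) ≤ Cardinal.mk ℝ := by
    rw [Cardinal.mk_real]
    calc Cardinal.mk (Finset (Fin k → ℝ)) ≤ Cardinal.mk (List (Fin k → ℝ)) :=
          Cardinal.mk_le_of_surjective (f := List.toFinset) List.toFinset_surjective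
      _ ≤ max Cardinal.aleph0 (Cardinal.mk (Fin k → ℝ)) := Cardinal.mk_list_le_max _
      _ ≤ Cardinal.continuum := max_le Cardinal.aleph0_le_continuum hk
  obtain ⟨f⟩ := h
  exact ⟨f, f.injective⟩

/-- A chosen injective code of the finite subsets of `ℝ^k` by real numbers. -/
noncomputable def finsetCode (k : ℕ) : Finset (Fin k → ℝ) → ℝ :=
  (exists_finset_code k).choose

theorem finsetCode_injective (k : ℕ) : Function.Injective (finsetCode k) :=
  (exists_finset_code k).choose_spec

theorem mem_capAt_one {α : Type*} (M : Multiset α) (a : α) : a ∈ M.capAt 1 ↔ a ∈ M := by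
  unfold Multiset.capAt
  simp only [Multiset.mem_bind, Finset.mem_val, Multiset.mem_toFinset, Multiset.mem_replicate]
  constructor
  · rintro ⟨b, hb, -, rfl⟩
    exact hb
  · intro ha
    have := Multiset.one_le_count_iff_mem.2 ha
    exact ⟨a, ha, by omega, rfl⟩

/-- The set-based colour refinement network with `L` layers: after `ℓ` layers the label of a node
consists of its `d` original entries followed by, for each `i < ℓ`, the code of the set of labels
that its neighbours had after `i` layers. The second aggregation function is trivial. -/
noncomputable def refineGNN (d L : ℕ) (cls : (Fin (d + L) → ℝ) → Bool) : GNN d where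
  kind := GNNKind.AC
  L := L
  dims := fun ℓ => d + ℓ
  dims_zero := rfl
  layer := fun ℓ _ =>
    { m₁ := 1
      m₂ := 0
      agg := fun M _ => finsetCode (d + ℓ) M.toFinset
      aux := fun _ _ => 0
      comb := fun x y _ => Fin.snoc (α := fun _ => ℝ) x (y 0) }
  cls := cls

/-- The labels computed by `refineGNN`, typed so that their dimension is visibly `d + ℓ`. -/
noncomputable def refineLabel {d : ℕ} (G : LGraph d) : (ℓ : ℕ) → Fin G.n → Fin (d + ℓ) → ℝ
  | 0 => fun v i => if G.label v i = true then 1 else 0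
  | ℓ + 1 => fun v => Fin.snoc (α := fun _ => ℝ) (refineLabel G ℓ v)
      (finsetCode (d + ℓ) ((G.nbrs v).val.map (refineLabel G ℓ)).toFinset)

theorem labelAt_refineGNN {d L : ℕ} (cls : (Fin (d + L) → ℝ) → Bool) (G : LGraph d) :
    ∀ ℓ, ℓ ≤ L → (refineGNN d L cls).labelAt G ℓ = refineLabel G ℓ
  | 0, _ => rfl
  | ℓ + 1, h => by
    have ih := labelAt_refineGNN cls G ℓ (by omega)
    have hl : ℓ < (refineGNN d L cls).L := h
    funext v
    exact (dif_pos hl).trans (congrArg (fun f : Fin G.n → Fin (d + ℓ) → ℝ =>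
      Fin.snoc (α := fun _ => ℝ) (f v)
        (finsetCode (d + ℓ) ((G.nbrs v).val.map f).toFinset)) ih)

section

variable {d : ℕ} {G G' : LGraph d} {ℓ : ℕ} {v : Fin G.n} {v' : Fin G'.n}

theorem refineLabel_pred (h : refineLabel G (ℓ + 1) v = refineLabel G' (ℓ + 1) v') :
    refineLabel G ℓ v = refineLabel G' ℓ v' :=
  (Fin.snoc_injective2 (α := fun _ => ℝ) h).1

theorem refineLabel_zero (h : refineLabel G ℓ v = refineLabel G' ℓ v') :
    refineLabel G 0 v = refineLabel G' 0 v' := by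
  induction ℓ with
  | zero => exact h
  | succ ℓ ih => exact ih (refineLabel_pred h)

/-- The forth condition of a bisimulation; the back condition is its instance for `h.symm`. -/
theorem refineLabel_forth (h : refineLabel G (ℓ + 1) v = refineLabel G' (ℓ + 1) v')
    {w : Fin G.n} (hw : G.adj v w) :
    ∃ w', G'.adj v' w' ∧ refineLabel G ℓ w = refineLabel G' ℓ w' := by
  have hs := finsetCode_injective _ (Fin.snoc_injective2 (α := fun _ => ℝ) h).2
  have hm : refineLabel G ℓ w ∈ ((G.nbrs v).val.map (refineLabel G ℓ)).toFinset := by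
    simp only [Multiset.mem_toFinset, Multiset.mem_map]
    exact ⟨w, by simpa [LGraph.nbrs] using hw, rfl⟩
  rw [hs] at hm
  simp only [Multiset.mem_toFinset, Multiset.mem_map] at hm
  obtain ⟨w', hw', he⟩ := hm
  exact ⟨w', by simpa [LGraph.nbrs] using hw', he.symm⟩

end

theorem sat_dia_one {d : ℕ} (G : LGraph d) (v : Fin G.n) (ψ : MForm d) :
    G.toKModel.sat v (MForm.dia 1 ψ) ↔ ∃ w : Fin G.n, G.adj v w ∧ G.toKModel.sat w ψ := by
  have : Finite G.toKModel.W := @Finite.of_fintype _ G.toKModel.fintype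
  change 0 < Nat.card {w : G.toKModel.W // G.toKModel.R v w ∧ G.toKModel.sat w ψ} ↔ _
  rw [Nat.card_pos_iff]
  constructor
  · rintro ⟨⟨w, hw⟩, -⟩
    exact ⟨w, hw⟩
  · rintro ⟨w, hw⟩
    exact ⟨⟨⟨w, hw⟩⟩, inferInstance⟩

/-- Nodes with equal labels after `ℓ` layers agree on the ML formulas of depth at most `ℓ`. -/
theorem refineGNN_sat {d : ℕ} (ψ : MForm d) (hψ : ψ.IsML) (ℓ : ℕ) (hℓ : ψ.depth ≤ ℓ)
    (G G' : LGraph d) (v : Fin G.n) (v' : Fin G'.n)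
    (h : refineLabel G ℓ v = refineLabel G' ℓ v') :
    G.toKModel.sat v ψ ↔ G'.toKModel.sat v' ψ := by
  induction ψ generalizing ℓ G G' with
  | prop p =>
    have h0 := congrFun (refineLabel_zero h) p
    simp only [refineLabel] at h0
    change G.label v p = true ↔ G'.label v' p = true
    split_ifs at h0 <;> simp_all
  | neg ψ ih => exact not_congr (ih hψ ℓ hℓ G G' v v' h)
  | and ψ χ ih₁ ih₂ =>
    have hd := max_le_iff.1 hℓ
    exact and_congr (ih₁ hψ.1 ℓ hd.1 G G' v v' h) (ih₂ hψ.2 ℓ hd.2 G G' v v' h)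
  | dia k ψ ih =>
    obtain ⟨rfl, hψ⟩ := hψ
    obtain _ | ℓ := ℓ
    · exact absurd hℓ (Nat.not_succ_le_zero _)
    have hd : ψ.depth ≤ ℓ := Nat.le_of_succ_le_succ hℓ
    rw [sat_dia_one, sat_dia_one]
    constructor
    · rintro ⟨w, hw, hs⟩
      obtain ⟨w', hw', he⟩ := refineLabel_forth h hw
      exact ⟨w', hw', (ih hψ ℓ hd G G' w w' he).1 hs⟩
    · rintro ⟨w', hw', hs⟩
      obtain ⟨w, hw, he⟩ := refineLabel_forth h.symm hw'
      exact ⟨w, hw, (ih hψ ℓ hd G' G w' w he).1 hs⟩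
  | glob k ψ ih => exact hψ.elim

/-- `ML ≤ GNN_s^AC`: for every basic modal logic classifier `φ` of dimension
`d` there exists a GNN classifier `N_φ` in `GNN_s^AC` (set-based, i.e. `1`-bounded,
aggregations) of dimension `d` such that for every pointed graph `(G,v)` of dimension `d`,
`N_φ(G,v) = true` iff `(M_G,v) ⊨ φ`. -/
theorem ml_le_gnn_s_ac :
    ∀ (d : ℕ) (φ : MForm d), φ.IsML →
      ∃ N : GNN d, N.kind = GNNKind.AC ∧
        (∀ (ℓ : ℕ) (h : ℓ < N.L), KBounded 1 (N.layer ℓ h).agg) ∧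
        ∀ (G : LGraph d) (v : Fin G.n),
          N.eval G v = true ↔ (LGraph.toKModel G).sat v φ := by
  intro d φ hφ
  -- A final label is accepted if some node satisfying `φ` in some graph receives it.
  let cls : (Fin (d + φ.depth) → ℝ) → Bool := fun x =>
    decide (∃ (G : LGraph d) (v : Fin G.n), refineLabel G φ.depth v = x ∧ G.toKModel.sat v φ)
  refine ⟨refineGNN d φ.depth cls, rfl, ?_, ?_⟩
  · intro ℓ h M
    have hM : M.toFinset = (M.capAt 1).toFinset := by
      ext a
      simp only [Multiset.mem_toFinset, mem_capAt_one]
    funext i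
    exact congrArg (finsetCode (d + ℓ)) hM
  · intro G v
    have heval : (refineGNN d φ.depth cls).eval G v = cls (refineLabel G φ.depth v) :=
      congrArg cls (congrFun (labelAt_refineGNN cls G φ.depth le_rfl) v)
    rw [heval, decide_eq_true_iff]
    constructor
    · rintro ⟨G', v', he, hs⟩
      exact (refineGNN_sat φ hφ _ le_rfl G' G v' v he).1 hs
    · intro hs
      exact ⟨G, v, rfl, hs⟩
end

section
/- For any ℓ,c ∈ ℕ and any class C of finite pointed Kripke models over a finite set PROP that is closed under ∼_{ℓ,c} (i.e., (M,v) ∈ C and (M,v) ∼_{ℓ,c} (M',v') imply (M',v') ∈ C), a pointed model (M',v') satisfies the disjunction ⋁_{(M,v)∈C} φ^{ℓ,c}_{[M,v]} (which has only finitely many distinct disjuncts, so it is a GML formula of depth at most ℓ and counting rank at most c) if and only if (M',v') ∈ C. -/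
/-!
The proof assigns to every pointed model its *graded type* of depth `n`: the set of propositions
true at the point, together with, for each graded type of depth `n - 1`, the number of neighbours
having that type, capped at `c`. There are finitely many graded types of each depth, and
three facts about them give the theorem.

* `gBisim_iff_gtyp`: Duplicator wins the `n`-round game iff the two graded types coincide.
  For one direction she answers a set `U₁` type by type, which the capped counts permit; for the
  other, Spoiler plays a set of neighbours that all have the same type.
* `sat_typeForm`: each graded type of depth `n` is defined by a GML formula of depth at most `n`
  and rank at most `c`, so a `∼_{ℓ,c}`-closed class is defined by the disjunction of the
  formulas of the finitely many types realised in it.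
* `gBisim_of_sat_charF` and `sat_charF_self`: a model of `φ^{ℓ,c}_{[M,v]}` is `∼_{ℓ,c}`-equivalent
  to `(M,v)`, and `(M,v)` is itself such a model. Hence the disjunction of characteristic formulas
  over a closed class is satisfied exactly in that class.

For `c = 0` the formula `φ^{ℓ,0}_{[M,v]}` still contains a modality `◇₁`, so it has rank `1` and is
strictly stronger than `∼_{ℓ,0}`-equivalence. This is why the defining formula is built from
graded types rather than from characteristic formulas, and why the two facts on `charF` treat
`c = 0` separately.
-/

attribute [local instance] Classical.propDecidable

attribute [local instance] KModel.fintype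

/-! ### Graded types -/

/-- Graded types of depth `n`: a set of propositions and, for `n > 0`, a multiplicity in
`{0, …, c}` for every graded type of depth `n - 1`. -/
def GType (d c : ℕ) : ℕ → Type
  | 0 => Set (Fin d)
  | n + 1 => Set (Fin d) × (GType d c n → Fin (c + 1))

theorem GType.finite (d c n : ℕ) : Finite (GType d c n) := by
  induction n with
  | zero => exact inferInstanceAs (Finite (Set (Fin d)))
  | succ n ih =>
    have := ih
    exact inferInstanceAs (Finite (Set (Fin d) × (GType d c n → Fin (c + 1))))

/-- The graded type of depth `n` of the pointed model `(M, v)`. -/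
noncomputable def gtyp {d : ℕ} (c : ℕ) (M : KModel d) : (n : ℕ) → M.W → GType d c n
  | 0, v => {p | M.val v p}
  | n + 1, v => ({p | M.val v p}, fun T =>
      ⟨min c (Nat.card {w : M.W // M.R v w ∧ gtyp c M n w = T}), by omega⟩)

theorem gtyp_zero_eq_iff {d c : ℕ} {M M' : KModel d} {v : M.W} {v' : M'.W} :
    gtyp c M 0 v = gtyp c M' 0 v' ↔ ∀ p, M.val v p ↔ M'.val v' p :=
  Set.ext_iff

theorem gtyp_succ_eq_iff {d c n : ℕ} {M M' : KModel d} {v : M.W} {v' : M'.W} :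
    gtyp c M (n + 1) v = gtyp c M' (n + 1) v' ↔
      (∀ p, M.val v p ↔ M'.val v' p) ∧
      ∀ T, min c (Nat.card {w : M.W // M.R v w ∧ gtyp c M n w = T}) =
        min c (Nat.card {w : M'.W // M'.R v' w ∧ gtyp c M' n w = T}) := by
  refine Prod.ext_iff.trans (and_congr Set.ext_iff ?_)
  refine funext_iff.trans (forall_congr' fun T => ?_)
  exact Fin.ext_iff

/-! ### Graded bisimilarity is equality of graded types -/

theorem natCard_nbrs {d : ℕ} (M : KModel d) (v : M.W) (P : M.W → Prop) :
    Nat.card {w : M.W // M.R v w ∧ P w} =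
      ((Finset.univ.filter fun w => M.R v w).filter P).card := by
  rw [Nat.card_eq_fintype_card, Fintype.card_subtype, Finset.filter_filter]

/-- Duplicator's answer to a set `U` of at most `c` neighbours: for every colour `t`, choose as
many elements of `B` with colour `t` as there are in `U`. -/
theorem exists_answer {α β τ : Type*} {c : ℕ} (f : α → τ) (g : β → τ)
    (A : Finset α) (B : Finset β)
    (h : ∀ t, min c (A.filter fun a => f a = t).card ≤ (B.filter fun b => g b = t).card)
    (U : Finset α) (hU : U ⊆ A) (hc : U.card ≤ c) :
    ∃ U₂ ⊆ B, U₂.card = U.card ∧ ∀ u₂ ∈ U₂, ∃ u₁ ∈ U, f u₁ = g u₂ := by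
  have hV : ∀ t, ∃ V ⊆ B.filter (fun b => g b = t),
      V.card = (U.filter fun a => f a = t).card := fun t => by
    refine Finset.exists_subset_card_eq (le_trans (le_min ?_ ?_) (h t))
    · exact (Finset.card_filter_le _ _).trans hc
    · exact Finset.card_le_card (Finset.filter_subset_filter _ hU)
  choose V hVB hVc using hV
  have hg : ∀ t, ∀ b ∈ V t, b ∈ B ∧ g b = t := fun t b hb => by
    simpa using hVB t hb
  refine ⟨(U.image f).biUnion V, ?_, ?_, ?_⟩
  · intro b hb
    obtain ⟨t, -, hbt⟩ := Finset.mem_biUnion.1 hb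
    exact (hg t b hbt).1
  · rw [Finset.card_biUnion, Finset.card_eq_sum_card_image f U]
    · exact Finset.sum_congr rfl fun t _ => hVc t
    · intro s _ t _ hst
      refine Finset.disjoint_left.2 fun b hs ht => hst ?_
      rw [← (hg s b hs).2, (hg t b ht).2]
  · intro b hb
    obtain ⟨t, ht, hbt⟩ := Finset.mem_biUnion.1 hb
    obtain ⟨a, ha, rfl⟩ := Finset.mem_image.1 ht
    exact ⟨a, ha, ((hg _ b hbt).2).symm⟩

/-- If every set of at most `c` elements of `A` has an answer in `B`, then Spoiler playing
monochromatic sets shows that the capped colour counts of `A` are at most those of `B`. -/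
theorem count_le_of_answer {α β τ : Type*} {c : ℕ} (f : α → τ) (g : β → τ)
    (A : Finset α) (B : Finset β)
    (h : ∀ U : Finset α, U.Nonempty → U.card ≤ c → U ⊆ A →
      ∃ U₂ : Finset β, U₂.card = U.card ∧ U₂ ⊆ B ∧ ∀ u₂ ∈ U₂, ∃ u₁ ∈ U, f u₁ = g u₂) (t : τ) :
    min c (A.filter fun a => f a = t).card ≤ min c (B.filter fun b => g b = t).card := by
  obtain ⟨U, hUA, hUc⟩ := Finset.exists_subset_card_eq
    (min_le_right c (A.filter fun a => f a = t).card)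
  rcases U.eq_empty_or_nonempty with rfl | hne
  · rw [← hUc]; simp
  obtain ⟨U₂, hc₂, hB, hcol⟩ := h U hne (by omega) (hUA.trans (Finset.filter_subset _ _))
  refine le_min (min_le_left _ _) ?_
  rw [← hUc, ← hc₂]
  refine Finset.card_le_card fun b hb => Finset.mem_filter.2 ⟨hB hb, ?_⟩
  obtain ⟨a, ha, hab⟩ := hcol b hb
  rw [← hab]
  exact (Finset.mem_filter.1 (hUA ha)).2

theorem gBisim_iff_gtyp {d : ℕ} (c n : ℕ) (M : KModel d) (v : M.W) (M' : KModel d) (v' : M'.W) :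
    GBisim c n M v M' v' ↔ gtyp c M n v = gtyp c M' n v' := by
  induction n generalizing v v' with
  | zero => rw [gtyp_zero_eq_iff]; rfl
  | succ n ih =>
    rw [gtyp_succ_eq_iff]
    simp only [GBisim, ih, natCard_nbrs]
    refine and_congr Iff.rfl ⟨fun ⟨hf, hb⟩ T => le_antisymm ?_ ?_, fun h => ⟨?_, ?_⟩⟩
    · refine count_le_of_answer (gtyp c M n) (gtyp c M' n) _ _ (fun U hne hc hU => ?_) T
      obtain ⟨U₂, h₁, h₂, h₃⟩ := hf U hne hc fun u hu => by simpa using hU hu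
      exact ⟨U₂, h₁, fun u hu => by simpa using h₂ u hu, h₃⟩
    · refine count_le_of_answer (gtyp c M' n) (gtyp c M n) _ _ (fun U hne hc hU => ?_) T
      obtain ⟨U₂, h₁, h₂, h₃⟩ := hb U hne hc fun u hu => by simpa using hU hu
      refine ⟨U₂, h₁, fun u hu => by simpa using h₂ u hu, fun u hu => ?_⟩
      obtain ⟨u₁, hu₁, he⟩ := h₃ u hu
      exact ⟨u₁, hu₁, he.symm⟩
    · intro U _ hc hU
      obtain ⟨U₂, h₁, h₂, h₃⟩ := exists_answer (gtyp c M n) (gtyp c M' n)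
        (Finset.univ.filter fun w => M.R v w) (Finset.univ.filter fun w => M'.R v' w)
        (fun t => (h t).le.trans (min_le_right _ _)) U (fun u hu => by simpa using hU u hu) hc
      exact ⟨U₂, h₂, fun u hu => by simpa using h₁ hu, h₃⟩
    · intro U _ hc hU
      obtain ⟨U₂, h₁, h₂, h₃⟩ := exists_answer (gtyp c M' n) (gtyp c M n)
        (Finset.univ.filter fun w => M'.R v' w) (Finset.univ.filter fun w => M.R v w)
        (fun t => (h t).ge.trans (min_le_right _ _)) U (fun u hu => by simpa using hU u hu) hc
      refine ⟨U₂, h₂, fun u hu => by simpa using h₁ hu, fun u hu => ?_⟩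
      obtain ⟨u₁, hu₁, he⟩ := h₃ u hu
      exact ⟨u₁, hu₁, he.symm⟩

/-! ### Formulas defining graded types -/

/-- `φ` is a GML formula of depth at most `n` and counting rank at most `c`. -/
def GMLBounded {d : ℕ} (n c : ℕ) (φ : MForm d) : Prop :=
  φ.IsGML ∧ φ.depth ≤ n ∧ φ.rank ≤ c

theorem sat_conjList {d : ℕ} (hd : 0 < d) (M : KModel d) (v : M.W) (L : List (MForm d)) :
    M.sat v (MForm.conjList hd L) ↔ ∀ φ ∈ L, M.sat v φ := by
  induction L with
  | nil => simp [MForm.conjList, MForm.top, KModel.sat]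
  | cons φ L ih =>
    cases L with
    | nil => simp [MForm.conjList]
    | cons ψ L => simp only [MForm.conjList, KModel.sat, ih, List.forall_mem_cons]

theorem gmlBounded_conjList {d : ℕ} (hd : 0 < d) {n c : ℕ} (L : List (MForm d))
    (h : ∀ φ ∈ L, GMLBounded n c φ) : GMLBounded n c (MForm.conjList hd L) := by
  induction L with
  | nil =>
    simp [GMLBounded, MForm.conjList, MForm.top, MForm.IsGML, MForm.depth, MForm.rank]
  | cons φ L ih =>
    cases L with
    | nil => exact h φ (by simp)
    | cons ψ L =>
      obtain ⟨h₁, h₂, h₃⟩ := h φ (by simp)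
      obtain ⟨i₁, i₂, i₃⟩ := ih fun χ hχ => h χ (List.mem_cons_of_mem _ hχ)
      exact ⟨⟨h₁, i₁⟩, max_le h₂ i₂, max_le h₃ i₃⟩

/-- The formula `φ` if `b` holds, and its negation otherwise. -/
noncomputable def signed {d : ℕ} (b : Prop) (φ : MForm d) : MForm d :=
  if b then φ else MForm.neg φ

theorem sat_signed {d : ℕ} (M : KModel d) (v : M.W) (b : Prop) (φ : MForm d) :
    M.sat v (signed b φ) ↔ (b ↔ M.sat v φ) := by
  unfold signed
  split_ifs with h <;> simp [h, KModel.sat]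

theorem gmlBounded_signed {d n c : ℕ} (b : Prop) {φ : MForm d} (h : GMLBounded n c φ) :
    GMLBounded n c (signed b φ) := by
  unfold signed
  split_ifs
  · exact h
  · exact h

/-- A list of all graded types of depth `n`. -/
noncomputable def typeList (d c n : ℕ) : List (GType d c n) :=
  (Set.finite_univ_iff.2 (GType.finite d c n)).toFinset.toList

theorem mem_typeList {d c n : ℕ} (T : GType d c n) : T ∈ typeList d c n := by
  simp [typeList]

/-- The conjunction fixing the truth value of every proposition according to `A`. -/
noncomputable def propForm {d : ℕ} (hd : 0 < d) (A : Set (Fin d)) : MForm d :=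
  MForm.conjList hd ((List.finRange d).map fun p => signed (p ∈ A) (MForm.prop p))

theorem sat_propForm {d : ℕ} (hd : 0 < d) (A : Set (Fin d)) (M : KModel d) (v : M.W) :
    M.sat v (propForm hd A) ↔ {p | M.val v p} = A := by
  simp only [propForm, sat_conjList, List.forall_mem_map, sat_signed, KModel.sat, Set.ext_iff,
    Set.mem_ofPred_eq]
  exact ⟨fun h p => (h p (List.mem_finRange p)).symm, fun h p _ => (h p).symm⟩

theorem gmlBounded_propForm {d : ℕ} (hd : 0 < d) (n c : ℕ) (A : Set (Fin d)) :
    GMLBounded n c (propForm hd A) := by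
  refine gmlBounded_conjList hd _ (List.forall_mem_map.2 fun p _ => gmlBounded_signed _ ?_)
  exact ⟨trivial, Nat.zero_le _, Nat.zero_le _⟩

/-- A GML formula defining the graded type `T`: it fixes the propositions and, for every type `S`
of the previous depth and `1 ≤ k ≤ c`, whether there are at least `k` neighbours of type `S`. -/
noncomputable def typeForm {d : ℕ} (hd : 0 < d) (c : ℕ) : (n : ℕ) → GType d c n → MForm d
  | 0, T => propForm hd T
  | n + 1, T => MForm.and (propForm hd T.1)
      (MForm.conjList hd ((typeList d c n).flatMap fun S =>
        (List.range c).map fun k =>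
          signed (k + 1 ≤ (T.2 S : ℕ)) (MForm.dia (k + 1) (typeForm hd c n S))))

theorem min_eq_iff_forall_le {c a b : ℕ} (hb : b ≤ c) :
    (∀ k < c, (k + 1 ≤ b ↔ k + 1 ≤ a)) ↔ min c a = b := by
  constructor
  · intro h
    by_contra hne
    rcases Nat.lt_or_gt_of_ne hne with hlt | hlt
    · have := h (min c a) (by omega)
      omega
    · have := h b (by omega)
      omega
  · intro h k hk
    omega

theorem sat_typeForm {d : ℕ} (hd : 0 < d) (c n : ℕ) (T : GType d c n) (M : KModel d) (v : M.W) :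
    M.sat v (typeForm hd c n T) ↔ gtyp c M n v = T := by
  induction n generalizing v with
  | zero => exact sat_propForm hd T M v
  | succ n ih =>
    simp only [typeForm, KModel.sat, sat_conjList, List.mem_flatMap, List.mem_map, List.mem_range,
      sat_propForm]
    have hext : gtyp c M (n + 1) v = T ↔
        {p | M.val v p} = T.1 ∧ ∀ S, (gtyp c M (n + 1) v).2 S = T.2 S :=
      Prod.ext_iff.trans (and_congr Iff.rfl funext_iff)
    refine Iff.trans (and_congr Iff.rfl ?_) hext.symm
    have key : ∀ S, (∀ k < c, (k + 1 ≤ (T.2 S : ℕ) ↔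
        k + 1 ≤ Nat.card {w : M.W // M.R v w ∧ M.sat w (typeForm hd c n S)})) ↔
        (gtyp c M (n + 1) v).2 S = T.2 S := fun S => by
      rw [min_eq_iff_forall_le (Nat.lt_succ_iff.1 (T.2 S).2), Fin.ext_iff]
      simp only [ih]
      rfl
    refine Iff.trans ?_ (forall_congr' key)
    constructor
    · intro h S k hk
      exact (sat_signed M v _ _).1 (h _ ⟨S, mem_typeList S, k, hk, rfl⟩)
    · rintro h _ ⟨S, -, k, hk, rfl⟩
      exact (sat_signed M v _ _).2 (h S k hk)

theorem gmlBounded_typeForm {d : ℕ} (hd : 0 < d) (c n : ℕ) (T : GType d c n) :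
    GMLBounded n c (typeForm hd c n T) := by
  induction n with
  | zero => exact gmlBounded_propForm hd _ _ _
  | succ n ih =>
    obtain ⟨p₁, p₂, p₃⟩ := gmlBounded_propForm hd (n + 1) c T.1
    obtain ⟨q₁, q₂, q₃⟩ : GMLBounded (n + 1) c
        (MForm.conjList hd ((typeList d c n).flatMap fun S => (List.range c).map fun k =>
          signed (k + 1 ≤ (T.2 S : ℕ)) (MForm.dia (k + 1) (typeForm hd c n S)))) := by
      refine gmlBounded_conjList hd _ fun φ hφ => ?_
      obtain ⟨S, -, hφ⟩ := List.mem_flatMap.1 hφ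
      obtain ⟨k, hk, rfl⟩ := List.mem_map.1 hφ
      obtain ⟨i₁, i₂, i₃⟩ := ih S
      refine gmlBounded_signed _ ⟨⟨Nat.succ_pos k, i₁⟩, Nat.succ_le_succ i₂, max_le ?_ i₃⟩
      exact List.mem_range.1 hk
    exact ⟨⟨p₁, q₁⟩, max_le p₂ q₂, max_le p₃ q₃⟩

/-! ### Characteristic formulas -/

theorem sat_atomDesc {d : ℕ} (hd : 0 < d) (M : KModel d) (v : M.W) (M' : KModel d) (v' : M'.W) :
    M'.sat v' (atomDesc hd M v) ↔ ∀ p, M.val v p ↔ M'.val v' p := by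
  simp only [atomDesc, sat_conjList, List.forall_mem_map]
  exact ⟨fun h p => (sat_signed M' v' (M.val v p) (MForm.prop p)).1 (h p (List.mem_finRange p)),
    fun h p _ => (sat_signed M' v' (M.val v p) (MForm.prop p)).2 (h p)⟩

theorem mem_nbrList {d : ℕ} {M : KModel d} {v w : M.W} :
    w ∈ M.worldList.filter (fun w => decide (M.R v w)) ↔ M.R v w := by
  simp [KModel.worldList]

/-- The semantics of the characteristic formula of depth `n + 1`, clause by clause. -/
theorem sat_charF_succ {d : ℕ} (hd : 0 < d) (c n : ℕ) (M : KModel d) (v : M.W)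
    (M' : KModel d) (v' : M'.W) :
    M'.sat v' (charF hd c M (n + 1) v) ↔
      (∀ p, M.val v p ↔ M'.val v' p) ∧
      (∀ w, M.R v w → ∀ k < c, (k + 1 ≤ USet c n M v w ↔
        k + 1 ≤ Nat.card {u : M'.W // M'.R v' u ∧ M'.sat u (charF hd c M n w)})) ∧
      ∀ u, M'.R v' u → ∃ w, M.R v w ∧ M'.sat u (charF hd c M n w) := by
  have hlast : M'.sat v' (MForm.neg (MForm.dia 1 (MForm.conjList hd
      ((M.worldList.filter fun w => decide (M.R v w)).map fun w =>
        MForm.neg (charF hd c M n w))))) ↔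
      ∀ u, M'.R v' u → ∃ w, M.R v w ∧ M'.sat u (charF hd c M n w) := by
    simp only [KModel.sat, sat_conjList, List.forall_mem_map, mem_nbrList, Nat.one_le_iff_ne_zero,
      not_not, Finite.card_eq_zero_iff, isEmpty_subtype, not_and, not_forall, exists_prop]
  rw [charF, sat_conjList]
  simp only [List.forall_mem_append, List.forall_mem_singleton, hlast, sat_atomDesc]
  rw [and_assoc, and_assoc]
  refine and_congr Iff.rfl ?_
  rw [← and_assoc]
  refine and_congr ?_ Iff.rfl
  simp only [List.mem_flatMap, mem_nbrList, List.mem_filterMap, List.mem_map, List.mem_range]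
  constructor
  · rintro ⟨h₁, h₂⟩ w hw k hk
    constructor
    · intro hle
      exact h₁ _ ⟨w, hw, k + 1, ⟨k, hk, rfl⟩, if_pos (le_min hle hk)⟩
    · intro hle
      by_contra hlt
      exact h₂ _ ⟨w, hw, k + 1, ⟨k, hk, rfl⟩, if_pos ⟨not_le.1 hlt, hk⟩⟩ hle
  · intro h
    constructor
    · rintro φ ⟨w, hw, _, ⟨k, hk, rfl⟩, hφ⟩
      split_ifs at hφ with hle
      obtain rfl := Option.some.inj hφ
      exact (h w hw k hk).1 (hle.trans (min_le_left _ _))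
    · rintro φ ⟨w, hw, _, ⟨k, hk, rfl⟩, hφ⟩
      split_ifs at hφ with hlt
      obtain rfl := Option.some.inj hφ
      exact fun hle => absurd ((h w hw k hk).2 hle) (not_le.2 hlt.1)

theorem sat_charF_iff {d : ℕ} (hd : 0 < d) {c : ℕ} (hc : 0 < c) (n : ℕ) (M : KModel d) (v : M.W)
    (M' : KModel d) (v' : M'.W) :
    M'.sat v' (charF hd c M n v) ↔ gtyp c M n v = gtyp c M' n v' := by
  induction n generalizing v v' with
  | zero => exact (sat_atomDesc hd M v M' v').trans gtyp_zero_eq_iff.symm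
  | succ n ih =>
    rw [sat_charF_succ, gtyp_succ_eq_iff]
    simp only [USet, gBisim_iff_gtyp, ih, eq_comm (a := gtyp c M n _) (b := gtyp c M' n _)]
    refine and_congr Iff.rfl ⟨?_, fun h => ⟨fun w _ k hk => ?_, fun u hu => ?_⟩⟩
    · rintro ⟨h₁, h₂⟩ T
      by_cases hT : ∃ w, M.R v w ∧ gtyp c M n w = T
      · obtain ⟨w, hw, rfl⟩ := hT
        have := (min_eq_iff_forall_le (min_le_left c _)).1 fun k hk =>
          (show k + 1 ≤ min c _ ↔ k + 1 ≤ _ by rw [le_min_iff]; exact and_iff_right hk).trans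
            (h₁ w hw k hk)
        exact this.symm
      · -- A type absent around `v` is absent around `v'` too, so both counts vanish.
        have e₁ : IsEmpty {w : M.W // M.R v w ∧ gtyp c M n w = T} := ⟨fun w => hT ⟨w.1, w.2⟩⟩
        have e₂ : IsEmpty {w : M'.W // M'.R v' w ∧ gtyp c M' n w = T} := ⟨fun u => by
          obtain ⟨w, hw, he⟩ := h₂ u.1 u.2.1
          exact hT ⟨w, hw, he.symm.trans u.2.2⟩⟩
        simp
    · have := h (gtyp c M n w)
      omega
    · have h' := h (gtyp c M' n u)
      have hpos : 0 < Nat.card {w : M'.W // M'.R v' w ∧ gtyp c M' n w = gtyp c M' n u} :=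
        Nat.card_pos_iff.2 ⟨⟨⟨u, hu, rfl⟩⟩, inferInstance⟩
      have hpos' : 0 < Nat.card {w : M.W // M.R v w ∧ gtyp c M n w = gtyp c M' n u} := by
        omega
      obtain ⟨⟨⟨w, hw, he⟩⟩, -⟩ := Nat.card_pos_iff.1 hpos'
      exact ⟨w, hw, he.symm⟩

theorem gBisim_of_sat_charF {d : ℕ} (hd : 0 < d) (c n : ℕ) (M : KModel d) (v : M.W)
    (M' : KModel d) (v' : M'.W) (h : M'.sat v' (charF hd c M n v)) : GBisim c n M v M' v' := by
  rcases Nat.eq_zero_or_pos c with rfl | hc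
  · -- Spoiler has no legal move when `c = 0`, so only the propositions matter.
    rw [gBisim_iff_gtyp]
    cases n with
    | zero => exact gtyp_zero_eq_iff.2 ((sat_atomDesc hd M v M' v').1 h)
    | succ n => exact gtyp_succ_eq_iff.2 ⟨((sat_charF_succ hd 0 n M v M' v').1 h).1, by simp⟩
  · exact (gBisim_iff_gtyp ..).2 ((sat_charF_iff hd hc n M v M' v').1 h)

theorem sat_charF_self {d : ℕ} (hd : 0 < d) (c n : ℕ) (M : KModel d) (v : M.W) :
    M.sat v (charF hd c M n v) := by
  rcases Nat.eq_zero_or_pos c with rfl | hc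
  · induction n generalizing v with
    | zero => exact (sat_atomDesc hd M v M v).2 fun _ => Iff.rfl
    | succ n ih =>
      exact (sat_charF_succ hd 0 n M v M v).2
        ⟨fun _ => Iff.rfl, fun _ _ k hk => absurd hk (Nat.not_lt_zero k), fun u hu => ⟨u, hu, ih u⟩⟩
  · exact (sat_charF_iff hd hc n M v M v).2 rfl

/-! ### Definability of closed classes -/

/-- For any `ℓ,c ∈ ℕ` and any class `C` of finite pointed Kripke models over a
finite nonempty set `PROP` that is closed under `∼_{ℓ,c}`, a pointed model `(M',v')` satisfies
the disjunction `⋁_{(M,v)∈C} φ^{ℓ,c}_{[M,v]}` (which has only finitely many distinct disjuncts,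
so it is realised by a GML formula `ψ` of depth at most `ℓ` and counting rank at most `c`)
if and only if `(M',v') ∈ C`. -/
theorem gml_definability :
    ∀ (d : ℕ) (hd : 0 < d) (ℓ c : ℕ) (C : (M : KModel d) → M.W → Prop),
      (∀ (M : KModel d) (v : M.W) (M' : KModel d) (v' : M'.W),
        C M v → GBisim c ℓ M v M' v' → C M' v') →
      ∃ ψ : MForm d, ψ.IsGML ∧ ψ.depth ≤ ℓ ∧ ψ.rank ≤ c ∧
        ∀ (M' : KModel d) (v' : M'.W),
          (M'.sat v' ψ ↔
            ∃ (M : KModel d) (v : M.W), C M v ∧ M'.sat v' (charF hd c M ℓ v)) ∧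
          (M'.sat v' ψ ↔ C M' v') := by
  intro d hd ℓ c C hC
  -- The disjunction of the types realised in `C`, written as a negated conjunction of negations.
  let ψ : MForm d := MForm.neg (MForm.conjList hd
    (((typeList d c ℓ).filter fun T => decide (∃ (M : KModel d) (v : M.W),
      C M v ∧ gtyp c M ℓ v = T)).map fun T => MForm.neg (typeForm hd c ℓ T)))
  have hψ : GMLBounded ℓ c ψ :=
    gmlBounded_conjList hd _ (List.forall_mem_map.2 fun T _ => gmlBounded_typeForm hd c ℓ T)
  have hdef : ∀ (M' : KModel d) (v' : M'.W), M'.sat v' ψ ↔ C M' v' := by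
    intro M' v'
    simp only [ψ, KModel.sat, sat_conjList, List.forall_mem_map, List.mem_filter, mem_typeList,
      true_and, decide_eq_true_eq, sat_typeForm]
    push Not
    constructor
    · rintro ⟨T, ⟨M, v, hv, rfl⟩, h⟩
      exact hC M v M' v' hv ((gBisim_iff_gtyp ..).2 h.symm)
    · intro h
      exact ⟨_, ⟨M', v', h, rfl⟩, rfl⟩
  refine ⟨ψ, hψ.1, hψ.2.1, hψ.2.2, fun M' v' => ⟨(hdef M' v').trans ⟨fun h => ?_, ?_⟩, hdef M' v'⟩⟩
  · exact ⟨M', v', h, sat_charF_self hd c ℓ M' v'⟩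
  · rintro ⟨M, v, hv, h⟩
    exact hC M v M' v' hv (gBisim_of_sat_charF hd c ℓ M v M' v' h)
end
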